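/- For every m ∈ [n], the following four sets of 321-avoiding permutations π of [n] all have the same cardinality, namely C^{(m+1)}_{n−m}: (1) those in which the letter 1 occurs in position ≥ m; (2) those with first entry π₁ ≥ m; (3) those in which the letter n occurs in position ≤ n+1−m; (4) those with last entry π_n ≤ n+1−m. -/

import Mathlib

/-!
A 321-avoiding permutation of `[n+1]` is determined by its first letter `p` (counted from `0`)
and the standardization `σ` of the remaining word. The pair `(p, σ)` comes from a 321-avoiding
permutation exactly when `σ` is 321-avoiding and the letters of `σ` below `p` appear in increasing
order (`avoids_insertFirst`). Let `a n s` (`incCount`) be the number of 321-avoiding permutations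
of `[n]` whose `s` smallest letters appear in increasing order. Then the permutations of `[n+1]`
with first letter at least `s` number `∑_{s ≤ p ≤ n} a n p` (`card_first_ge`), and the same
decomposition shows that this sum is also `a (n+1) (s+1)` (`incCount_succ_succ`): either `p = 0`
and the `s` smallest letters of `σ` are increasing, which accounts for the term `a n s`, or
`p ≥ s + 1`. Since the ballot numbers satisfy
`C^{(s+2)}_{n-s} = ∑_{s ≤ p ≤ n} C^{(p+1)}_{n-p}` (`sum_ballot`, by Pascal's rule), induction on
`n` gives `a n s = C^{(s+1)}_{n-s}`, and hence the count for the first entry.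

The other three counts follow because inversion and reverse-complementation preserve
321-avoidance: inversion exchanges entries with positions, and reverse-complementation exchanges
the first entry with the last.
-/

/-- The ballot number `C^{(k)}_n = C(2n+k-1, n) - C(2n+k-1, n-1)`, with `C(a,-1) = 0`. -/
def ballot (k n : ℕ) : ℕ :=
  Nat.choose (2 * n + k - 1) n - (if n = 0 then 0 else Nat.choose (2 * n + k - 1) (n - 1))

/-- The number of occurrences of the pattern 321 in a permutation of `{0,…,n-1}`:
triples of positions `i < j < k` with `π i > π j > π k`. -/
noncomputable def occ321Count (n : ℕ) (π : Equiv.Perm (Fin n)) : ℕ :=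
  Nat.card {t : Fin n × Fin n × Fin n //
    t.1 < t.2.1 ∧ t.2.1 < t.2.2 ∧ π t.2.2 < π t.2.1 ∧ π t.2.1 < π t.1}

open Finset

/-- `π` has no occurrence of the pattern 321. -/
def Avoids {n : ℕ} (π : Equiv.Perm (Fin n)) : Prop :=
  ∀ i j k, i < j → j < k → π k < π j → ¬ π j < π i

/-- The letters of `π` that are less than `s` (with letters counted from `0`) appear in increasing
order. It is phrased as: a letter less than `s` is followed by larger letters only. -/
def IncBelow {n : ℕ} (s : ℕ) (π : Equiv.Perm (Fin n)) : Prop :=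
  ∀ i j, i < j → (π i : ℕ) < s → π i < π j

/-- The number of 321-avoiding permutations of `[n]` whose `s` smallest letters appear in
increasing order. -/
noncomputable def incCount (n s : ℕ) : ℕ :=
  Nat.card {π : Equiv.Perm (Fin n) // Avoids π ∧ IncBelow s π}

theorem occ321Count_eq_zero_iff {n : ℕ} (π : Equiv.Perm (Fin n)) :
    occ321Count n π = 0 ↔ Avoids π := by
  unfold occ321Count
  rw [Finite.card_eq_zero_iff, isEmpty_subtype]
  constructor
  · intro h i j k hij hjk h1 h2
    exact h (i, j, k) ⟨hij, hjk, h1, h2⟩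
  · rintro h ⟨i, j, k⟩ ⟨hij, hjk, h1, h2⟩
    exact h i j k hij hjk h1 h2

/-! ### Ballot numbers -/

theorem ballot_zero (k : ℕ) : ballot k 0 = 1 := by simp [ballot]

theorem cast_ballot_succ (s k : ℕ) : (ballot (s + 1) (k + 1) : ℤ) =
    Nat.choose (2 * k + s + 2) (k + 1) - Nat.choose (2 * k + s + 2) k := by
  have h : Nat.choose (2 * k + s + 2) k ≤ Nat.choose (2 * k + s + 2) (k + 1) :=
    Nat.choose_le_succ_of_lt_half_left (by omega)
  have e : 2 * (k + 1) + (s + 1) - 1 = 2 * k + s + 2 := by omega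
  simp only [ballot, e, Nat.add_sub_cancel, Nat.succ_ne_zero, if_false]
  push_cast [h]
  ring

theorem ballot_pascal (s k : ℕ) :
    ballot (s + 2) (k + 1) = ballot (s + 1) (k + 1) + ballot (s + 3) k := by
  zify
  cases k with
  | zero =>
    rw [cast_ballot_succ (s + 1), cast_ballot_succ s, ballot_zero]
    simp
    ring
  | succ k =>
    rw [cast_ballot_succ (s + 1), cast_ballot_succ s, cast_ballot_succ (s + 2)]
    have e1 : 2 * (k + 1) + (s + 1) + 2 = (2 * k + s + 4) + 1 := by ring
    have e2 : 2 * (k + 1) + s + 2 = 2 * k + s + 4 := by ring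
    have e3 : 2 * k + (s + 2) + 2 = 2 * k + s + 4 := by ring
    rw [e1, e2, e3, Nat.choose_succ_succ' (2 * k + s + 4) (k + 1),
      Nat.choose_succ_succ' (2 * k + s + 4) k]
    push_cast
    ring

/-- Both sides are the Catalan number `C_{n+1}`. -/
theorem ballot_one_succ (n : ℕ) : ballot 1 (n + 1) = ballot 2 n := by
  zify
  cases n with
  | zero => simp [ballot]
  | succ k =>
    rw [cast_ballot_succ 0, cast_ballot_succ 1]
    have e1 : 2 * (k + 1) + 0 + 2 = (2 * k + 3) + 1 := by ring
    have e2 : 2 * k + 1 + 2 = 2 * k + 3 := by ring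
    have e3 : Nat.choose (2 * k + 3) (k + 1 + 1) = Nat.choose (2 * k + 3) (k + 1) :=
      Nat.choose_symm_of_eq_add (by ring)
    rw [e1, e2, Nat.choose_succ_succ' (2 * k + 3) (k + 1),
      Nat.choose_succ_succ' (2 * k + 3) k, e3]
    push_cast
    ring

theorem sum_ballot (k s : ℕ) :
    ∑ p ∈ Ico s (s + k + 1), ballot (p + 1) (s + k - p) = ballot (s + 2) k := by
  induction k generalizing s with
  | zero => simp [ballot_zero]
  | succ k ih =>
    rw [sum_eq_sum_Ico_succ_bot (by omega), ballot_pascal, ← ih (s + 1),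
      show s + 1 + k + 1 = s + (k + 1) + 1 by ring, show s + 1 + k = s + (k + 1) by ring,
      Nat.add_sub_cancel_left]

/-! ### Splitting off the first letter -/

/-- The permutation of `[n+1]` with first letter `p` whose remaining letters are in the same
relative order as `σ`. -/
def insertFirst {n : ℕ} (p : Fin (n + 1)) (σ : Equiv.Perm (Fin n)) : Equiv.Perm (Fin (n + 1)) :=
  (finSuccEquiv n).trans ((Equiv.optionCongr σ).trans (finSuccEquiv' p).symm)

@[simp] theorem insertFirst_zero {n : ℕ} (p : Fin (n + 1)) (σ : Equiv.Perm (Fin n)) :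
    insertFirst p σ 0 = p := by simp [insertFirst]

@[simp] theorem insertFirst_succ {n : ℕ} (p : Fin (n + 1)) (σ : Equiv.Perm (Fin n)) (i : Fin n) :
    insertFirst p σ i.succ = p.succAbove (σ i) := by simp [insertFirst]

theorem insertFirst_bijective (n : ℕ) : Function.Bijective
    (fun x : Fin (n + 1) × Equiv.Perm (Fin n) => insertFirst x.1 x.2) := by
  rw [Fintype.bijective_iff_injective_and_card]
  refine ⟨?_, by simp [Fintype.card_perm, Nat.factorial_succ]⟩
  rintro ⟨p, σ⟩ ⟨q, τ⟩ h
  have h0 : p = q := by simpa using congrArg (fun π => π 0) h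
  subst h0
  have h1 : σ = τ := by
    ext i
    have := congrArg (fun π => π i.succ) h
    simp only [insertFirst_succ, Fin.succAbove_right_inj] at this
    rw [this]
  rw [h1]

/-- Permutations of `[n+1]` correspond to pairs (first letter, standardized remaining word). -/
noncomputable def insertFirstEquiv (n : ℕ) :
    Fin (n + 1) × Equiv.Perm (Fin n) ≃ Equiv.Perm (Fin (n + 1)) :=
  Equiv.ofBijective _ (insertFirst_bijective n)

theorem succAbove_lt_self_iff {n : ℕ} (p : Fin (n + 1)) (i : Fin n) :
    p.succAbove i < p ↔ (i : ℕ) < p := by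
  rw [Fin.succAbove_lt_iff_castSucc_lt, Fin.lt_def, Fin.val_castSucc]

theorem avoids_insertFirst {n : ℕ} (p : Fin (n + 1)) (σ : Equiv.Perm (Fin n)) :
    Avoids (insertFirst p σ) ↔ Avoids σ ∧ IncBelow p σ := by
  constructor
  · intro h
    refine ⟨fun i j k hij hjk h1 h2 => ?_, fun i j hij hi => ?_⟩
    · refine h i.succ j.succ k.succ (by simpa) (by simpa) ?_ ?_ <;> simpa
    · -- otherwise the first letter `p` followed by `σ i` and `σ j` is an occurrence of 321
      by_contra hlt
      have hne : σ j ≠ σ i := fun e => hij.ne' (σ.injective e)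
      refine h 0 i.succ j.succ (Fin.succ_pos _) (by simpa) ?_ ?_
      · simpa using lt_of_le_of_ne (not_lt.1 hlt) hne
      · simpa [succAbove_lt_self_iff] using hi
  · rintro ⟨h, hp⟩ i j k hij hjk h1 h2
    obtain ⟨j, rfl⟩ := Fin.exists_succ_eq.2 (Fin.ne_zero_of_lt hij)
    obtain ⟨k, rfl⟩ := Fin.exists_succ_eq.2 (Fin.ne_zero_of_lt hjk)
    have hjk' : j < k := by simpa using hjk
    have h1' : σ k < σ j := by simpa using h1
    cases i using Fin.cases with
    | zero =>
      simp only [insertFirst_zero, insertFirst_succ, succAbove_lt_self_iff] at h2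
      exact lt_asymm h1' (hp j k hjk' h2)
    | succ i =>
      exact h i j k (by simpa using hij) hjk' h1' (by simpa using h2)

/-- The `s + 1` smallest letters are increasing only if the first letter is the smallest one or is
not among them; in the latter case 321-avoidance, in the form `IncBelow p σ`, suffices. -/
theorem incBelow_insertFirst {n : ℕ} (s : ℕ) (p : Fin (n + 1)) (σ : Equiv.Perm (Fin n))
    (hσ : IncBelow p σ) :
    IncBelow (s + 1) (insertFirst p σ) ↔ (p = 0 ∧ IncBelow s σ) ∨ s + 1 ≤ (p : ℕ) := by
  constructor
  · intro h
    by_cases hsp : s + 1 ≤ (p : ℕ)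
    · exact Or.inr hsp
    refine Or.inl ?_
    have hp0 : p = 0 := by
      by_contra hp
      -- the letter `0` occurs after the first letter `p`
      obtain ⟨i, hi⟩ := (insertFirst p σ).surjective 0
      have hi0 : i ≠ 0 := by
        rintro rfl
        exact hp (by simpa using hi)
      have := h 0 i (Fin.pos_of_ne_zero hi0) (by simpa using hsp)
      rw [hi] at this
      exact absurd this (Fin.not_lt_zero _)
    subst hp0
    refine ⟨rfl, fun i j hij hi => ?_⟩
    have := h i.succ j.succ (by simpa) (by simpa using hi)
    simpa using this
  · rintro (⟨rfl, h⟩ | h) i j hij hi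
    · obtain ⟨j, rfl⟩ := Fin.exists_succ_eq.2 (Fin.ne_zero_of_lt hij)
      cases i using Fin.cases with
      | zero => simp
      | succ i =>
        have := h i j (by simpa using hij) (by simpa using hi)
        simpa using this
    · obtain ⟨j, rfl⟩ := Fin.exists_succ_eq.2 (Fin.ne_zero_of_lt hij)
      cases i using Fin.cases with
      | zero =>
        simp only [insertFirst_zero] at hi
        omega
      | succ i =>
        have hlt : p.succAbove (σ i) < p := by
          rw [Fin.lt_def]
          simp only [insertFirst_succ] at hi
          omega
        have := hσ i j (by simpa using hij) ((succAbove_lt_self_iff _ _).1 hlt)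
        simpa using this

/-! ### Counting -/

/-- Counting pairs `(p, σ)` by fixing `p` first. -/
theorem card_perm_succ {n : ℕ} (Q : Equiv.Perm (Fin (n + 1)) → Prop) :
    Nat.card {π // Q π} = ∑ p : Fin (n + 1), Nat.card {σ // Q (insertFirst p σ)} := by
  rw [← Nat.card_sigma]
  exact Nat.card_congr (((insertFirstEquiv n).subtypeEquiv (fun _ => Iff.rfl)).symm.trans
    (Equiv.subtypeProdEquivSigmaSubtype (fun p σ => Q (insertFirst p σ))))

theorem sum_fin_ge (f : ℕ → ℕ) (n s : ℕ) :
    (∑ p : Fin (n + 1), if s ≤ (p : ℕ) then f p else 0) = ∑ p ∈ Ico s (n + 1), f p := by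
  rw [Fin.sum_univ_eq_sum_range (fun p => if s ≤ p then f p else 0), ← sum_filter]
  congr 1
  ext p
  simp
  omega

theorem card_first_ge (n s : ℕ) :
    Nat.card {π : Equiv.Perm (Fin (n + 1)) // Avoids π ∧ s ≤ (π 0 : ℕ)} =
      ∑ p ∈ Ico s (n + 1), incCount n p := by
  rw [card_perm_succ, ← sum_fin_ge]
  refine sum_congr rfl fun p _ => ?_
  simp only [avoids_insertFirst, insertFirst_zero]
  split_ifs with h
  · simp [h, incCount]
  · simp [h]

theorem incCount_succ_succ (n s : ℕ) (hs : s ≤ n) :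
    incCount (n + 1) (s + 1) = ∑ p ∈ Ico s (n + 1), incCount n p := by
  rw [sum_eq_sum_Ico_succ_bot (by omega), ← sum_fin_ge, incCount, card_perm_succ,
    Fin.sum_univ_succ, Fin.sum_univ_succ]
  have key : ∀ (p : Fin (n + 1)) (σ : Equiv.Perm (Fin n)),
      (Avoids (insertFirst p σ) ∧ IncBelow (s + 1) (insertFirst p σ)) ↔
        (Avoids σ ∧ IncBelow p σ) ∧ ((p = 0 ∧ IncBelow s σ) ∨ s + 1 ≤ (p : ℕ)) := by
    intro p σ
    rw [avoids_insertFirst]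
    exact and_congr_right fun h => incBelow_insertFirst s p σ h.2
  simp only [key]
  have h0 : ∀ σ : Equiv.Perm (Fin n), IncBelow 0 σ := fun σ i j _ h => absurd h (by omega)
  congr 1
  · simp [h0, incCount]
  · rw [if_neg (by simp), zero_add]
    refine sum_congr rfl fun p _ => ?_
    split_ifs with h
    · simp only [h, or_true, and_true, incCount]
    · simp only [h, Fin.succ_ne_zero, false_and, or_self, and_false, Nat.card_of_isEmpty]

theorem incCount_zero_eq_one (n : ℕ) : incCount n 0 = incCount n 1 := by
  refine Nat.card_congr (Equiv.subtypeEquivRight fun π => and_congr_right fun _ => ⟨?_, ?_⟩)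
  · intro _ i j hij hi
    have hne : π i ≠ π j := fun e => hij.ne (π.injective e)
    rw [Fin.lt_def]
    rw [Ne, Fin.ext_iff] at hne
    omega
  · intro _ i j _ hi
    omega

theorem incCount_eq_ballot (n s : ℕ) (hs : s ≤ n) : incCount n s = ballot (s + 1) (n - s) := by
  induction n generalizing s with
  | zero =>
    obtain rfl : s = 0 := by omega
    have h : ∀ π : Equiv.Perm (Fin 0), Avoids π ∧ IncBelow 0 π :=
      fun π => ⟨fun i => i.elim0, fun i => i.elim0⟩
    simp [incCount, h, ballot_zero]
  | succ n ih =>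
    have step : ∀ s ≤ n, incCount (n + 1) (s + 1) = ballot (s + 2) (n - s) := by
      intro s hs
      obtain ⟨k, rfl⟩ := Nat.exists_eq_add_of_le hs
      rw [incCount_succ_succ _ _ hs, Nat.add_sub_cancel_left, ← sum_ballot]
      refine sum_congr rfl fun p hp => ih p ?_
      rw [mem_Ico] at hp
      omega
    cases s with
    | zero => rw [incCount_zero_eq_one, step 0 (by omega)]; exact (ballot_one_succ n).symm
    | succ s => rw [step s (by omega), Nat.add_sub_add_right]

theorem card_first_ge_eq_ballot (n s : ℕ) (hs : s ≤ n) :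
    Nat.card {π : Equiv.Perm (Fin (n + 1)) // Avoids π ∧ s ≤ (π 0 : ℕ)} =
      ballot (s + 2) (n - s) := by
  rw [card_first_ge, ← incCount_succ_succ n s hs, incCount_eq_ballot _ _ (by omega),
    Nat.add_sub_add_right]

/-! ### Symmetries -/

theorem avoids_symm_of_avoids {n : ℕ} {π : Equiv.Perm (Fin n)} (h : Avoids π) :
    Avoids π.symm := by
  intro i j k hij hjk h1 h2
  exact h _ _ _ h1 h2 (by simpa using hij) (by simpa using hjk)

theorem avoids_symm {n : ℕ} (π : Equiv.Perm (Fin n)) : Avoids π.symm ↔ Avoids π :=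
  ⟨fun h => by simpa using avoids_symm_of_avoids h, avoids_symm_of_avoids⟩

/-- Reverse-complementation of permutations. -/
def revComp (n : ℕ) : Equiv.Perm (Fin n) ≃ Equiv.Perm (Fin n) :=
  Equiv.permCongr Fin.revPerm

theorem revComp_apply {n : ℕ} (π : Equiv.Perm (Fin n)) (i : Fin n) :
    revComp n π i = (π i.rev).rev := by
  simp [revComp]

theorem avoids_revComp {n : ℕ} (π : Equiv.Perm (Fin n)) : Avoids (revComp n π) ↔ Avoids π := by
  constructor
  · intro h i j k hij hjk h1 h2
    refine h k.rev j.rev i.rev (by simpa) (by simpa) ?_ ?_ <;> simpa [revComp_apply]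
  · intro h i j k hij hjk h1 h2
    simp only [revComp_apply, Fin.rev_lt_rev] at h1 h2
    exact h k.rev j.rev i.rev (by simpa) (by simpa) h2 h1

/-- Inversion turns a condition on the position of a letter into a condition on an entry. -/
theorem card_symm {n : ℕ} (a : Fin n) (R : Fin n → Prop) :
    Nat.card {π : Equiv.Perm (Fin n) // Avoids π ∧ R (π.symm a)} =
      Nat.card {π : Equiv.Perm (Fin n) // Avoids π ∧ R (π a)} := by
  refine Nat.card_congr (Equiv.subtypeEquiv ⟨Equiv.symm, Equiv.symm, fun _ => rfl, fun _ => rfl⟩ ?_)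
  intro π
  exact and_congr (avoids_symm π).symm Iff.rfl

/-- For `m ∈ [n]`, the four sets of 321-avoiding permutations `π` of `[n]` in which
(1) the letter `1` occurs in position `≥ m`, (2) the first entry is `≥ m`,
(3) the letter `n` occurs in position `≤ n+1-m`, (4) the last entry is `≤ n+1-m`,
all have cardinality `C^{(m+1)}_{n-m}`.  (A permutation of `[n]` is modelled as
`π : Equiv.Perm (Fin n)`: the letter in position `i+1` is `(π i : ℕ) + 1`, and the
position of the letter `v+1` is `(π.symm v : ℕ) + 1`.) -/
theorem avoid321_four_counts (n m : ℕ) (hm : 1 ≤ m) (hmn : m ≤ n) :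
    Nat.card {π : Equiv.Perm (Fin n) //
        occ321Count n π = 0 ∧ m ≤ ((π.symm ⟨0, by omega⟩ : Fin n) : ℕ) + 1}
      = ballot (m + 1) (n - m) ∧
    Nat.card {π : Equiv.Perm (Fin n) //
        occ321Count n π = 0 ∧ m ≤ ((π ⟨0, by omega⟩ : Fin n) : ℕ) + 1}
      = ballot (m + 1) (n - m) ∧
    Nat.card {π : Equiv.Perm (Fin n) //
        occ321Count n π = 0 ∧
          ((π.symm ⟨n - 1, by omega⟩ : Fin n) : ℕ) + 1 ≤ n + 1 - m}
      = ballot (m + 1) (n - m) ∧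
    Nat.card {π : Equiv.Perm (Fin n) //
        occ321Count n π = 0 ∧ ((π ⟨n - 1, by omega⟩ : Fin n) : ℕ) + 1 ≤ n + 1 - m}
      = ballot (m + 1) (n - m) := by
  obtain ⟨s, rfl⟩ : ∃ s, m = s + 1 := ⟨m - 1, by omega⟩
  obtain ⟨n, rfl⟩ : ∃ k, n = k + 1 := ⟨n - 1, by omega⟩
  simp only [occ321Count_eq_zero_iff]
  have first : Nat.card {π : Equiv.Perm (Fin (n + 1)) //
      Avoids π ∧ s + 1 ≤ ((π ⟨0, by omega⟩ : Fin (n + 1)) : ℕ) + 1}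
        = ballot (s + 1 + 1) (n + 1 - (s + 1)) := by
    rw [Nat.add_sub_add_right, ← card_first_ge_eq_ballot n s (by omega)]
    simp only [Nat.add_le_add_iff_right, Fin.mk_zero']
  have last : Nat.card {π : Equiv.Perm (Fin (n + 1)) //
      Avoids π ∧ ((π ⟨n + 1 - 1, by omega⟩ : Fin (n + 1)) : ℕ) + 1 ≤ n + 1 + 1 - (s + 1)}
        = ballot (s + 1 + 1) (n + 1 - (s + 1)) := by
    rw [← first]
    refine Nat.card_congr ((revComp (n + 1)).subtypeEquiv fun π => ?_)
    have e : (⟨0, by omega⟩ : Fin (n + 1)).rev = ⟨n + 1 - 1, by omega⟩ := by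
      ext
      simp
    rw [avoids_revComp, revComp_apply, e, Fin.val_rev]
    refine and_congr_right fun _ => ?_
    omega
  refine ⟨?_, first, ?_, last⟩
  · exact (card_symm _ (fun x : Fin (n + 1) => s + 1 ≤ (x : ℕ) + 1)).trans first
  · exact (card_symm _ (fun x : Fin (n + 1) => (x : ℕ) + 1 ≤ n + 1 + 1 - (s + 1))).trans last
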